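/- arXiv:1912.03728 — 7 statements merged into one kernel-verified Lean document; each statement's English description precedes it below -/
import Mathlib

section
/- Let K be an n×n real matrix with nonnegative entries, let d ∈ ℝⁿ be a vector with strictly positive entries, and let b > 0. Then the scalar series ∑_{w=0}^∞ b^w dᵀ K^w p converges for every probability vector p ∈ ℝⁿ if and only if b·ρ(K) < 1. -/
/-!
Both directions compare the scalar series with the matrix powers `b ^ w • K ^ w`, viewed in the
Banach algebra of complex matrices with the `ℓ^∞` operator norm.

If `b * ρ(K) < 1`, pick `r` with `ρ(K) < r < 1 / b`. Gelfand's formula gives `‖K ^ w‖ ≤ r ^ w` for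
all large `w`, so every entry series `∑ b ^ w (K ^ w) i j` is dominated by the geometric series of
ratio `b * r < 1`, and the scalar series is a finite linear combination of these.

Conversely, taking `p` to be the standard basis vectors, the terms of the series tend to zero; since
`d` is positive and `K` nonnegative there is no cancellation, so every entry of `b ^ w • K ^ w` tends
to zero. Hence `b ^ w * ‖K ^ w‖ < 1` for some `w ≥ 1`, and if `k` is an eigenvalue of `K` of maximal
modulus then `(b * ρ(K)) ^ w = b ^ w * ‖k ^ w‖ ≤ b ^ w * ‖K ^ w‖ < 1`.
-/

open Matrix Filter

/-- Spectral radius of a real square matrix, computed via its complex spectrum. -/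
noncomputable def specRad {n : ℕ} (K : Matrix (Fin n) (Fin n) ℝ) : ℝ :=
  (spectralRadius ℂ (K.map Complex.ofReal)).toReal

attribute [local instance] Matrix.linftyOpNormedRing Matrix.linftyOpNormedAlgebra

lemma norm_entry_le_linftyOp {n : ℕ} (A : Matrix (Fin n) (Fin n) ℂ) (i j : Fin n) :
    ‖A i j‖ ≤ ‖A‖ := by
  have h : ‖A i j‖₊ ≤ ‖A‖₊ := by
    rw [Matrix.linfty_opNNNorm_def]
    exact (Finset.single_le_sum (f := fun j => ‖A i j‖₊) (fun _ _ => zero_le)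
      (Finset.mem_univ j)).trans
      (Finset.le_sup (f := fun i => ∑ j, ‖A i j‖₊) (Finset.mem_univ i))
  exact_mod_cast h

lemma map_ofReal_pow {n : ℕ} (K : Matrix (Fin n) (Fin n) ℝ) (w : ℕ) :
    (K.map Complex.ofReal) ^ w = (K ^ w).map Complex.ofReal :=
  (Matrix.map_pow (f := Complex.ofRealHom) K w).symm

lemma abs_entry_pow_le {n : ℕ} (K : Matrix (Fin n) (Fin n) ℝ) (w : ℕ) (i j : Fin n) :
    |(K ^ w) i j| ≤ ‖(K.map Complex.ofReal) ^ w‖ := by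
  have h := norm_entry_le_linftyOp ((K.map Complex.ofReal) ^ w) i j
  rw [map_ofReal_pow] at h ⊢
  simpa using h

lemma pow_entry_nonneg {n : ℕ} {K : Matrix (Fin n) (Fin n) ℝ} (hK : ∀ i j, 0 ≤ K i j) (w : ℕ) :
    ∀ i j, 0 ≤ (K ^ w) i j := by
  induction w with
  | zero =>
    intro i j
    rw [pow_zero, Matrix.one_apply]
    split_ifs <;> norm_num
  | succ w ih =>
    intro i j
    rw [pow_succ, Matrix.mul_apply]
    exact Finset.sum_nonneg fun k _ => mul_nonneg (ih i k) (hK k j)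

/-- Gelfand's formula makes every entry series dominated by a convergent geometric series. -/
lemma summable_entry {n : ℕ} (K : Matrix (Fin n) (Fin n) ℝ) {b : ℝ} (hb : 0 < b)
    (h : b * specRad K < 1) (i j : Fin n) :
    Summable fun w : ℕ => b ^ w * (K ^ w) i j := by
  set A := K.map Complex.ofReal with hA
  have : Nonempty (Fin n) := ⟨i⟩
  have : NormOneClass (Matrix (Fin n) (Fin n) ℂ) := Matrix.linfty_opNormOneClass
  have hfin : spectralRadius ℂ A ≠ ⊤ :=
    ((spectrum.spectralRadius_le_nnnorm A).trans_lt ENNReal.coe_lt_top).ne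
  have hlt : specRad K < 1 / b := by
    rw [lt_div_iff₀ hb]
    linarith
  obtain ⟨r, hr1, hr2⟩ := exists_between hlt
  have hr0 : 0 < r := lt_of_le_of_lt ENNReal.toReal_nonneg hr1
  have hlim := spectrum.pow_norm_pow_one_div_tendsto_nhds_spectralRadius A
  have hlt' : spectralRadius ℂ A < ENNReal.ofReal r :=
    (ENNReal.lt_ofReal_iff_toReal_lt hfin).2 hr1
  have hbr : b * r < 1 := by
    rw [lt_div_iff₀ hb] at hr2
    linarith
  refine Summable.of_norm_bounded_eventually_nat
    (summable_geometric_of_lt_one (by positivity) hbr) ?_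
  filter_upwards [hlim.eventually_lt_const hlt', eventually_gt_atTop 0] with w hw hw0
  have hw' : ‖A ^ w‖ ^ (1 / w : ℝ) < r := (ENNReal.ofReal_lt_ofReal_iff hr0).1 hw
  have hpow : ‖A ^ w‖ ≤ r ^ w := by
    have h1 := pow_le_pow_left₀ (Real.rpow_nonneg (norm_nonneg _) _) hw'.le w
    rwa [one_div, Real.rpow_inv_natCast_pow (norm_nonneg _) hw0.ne'] at h1
  rw [norm_mul, mul_pow, Real.norm_eq_abs, Real.norm_eq_abs, abs_of_pos (pow_pos hb w)]
  gcongr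
  exact (abs_entry_pow_le K w i j).trans hpow

/-- If the powers of `b • K` tend to zero entrywise, then an eigenvalue of maximal modulus has
modulus below `1 / b`. -/
lemma mul_specRad_lt_one {n : ℕ} (K : Matrix (Fin n) (Fin n) ℝ) {b : ℝ} (hb : 0 < b)
    (h : ∀ i j, Tendsto (fun w : ℕ => b ^ w * (K ^ w) i j) atTop (nhds 0)) :
    b * specRad K < 1 := by
  rcases Nat.eq_zero_or_pos n with rfl | hn
  · -- The algebra of `0 × 0` matrices is trivial, so the spectrum is empty and `ρ(K) = 0`.
    simp [specRad, spectrum.SpectralRadius.of_subsingleton]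
  have : Nonempty (Fin n) := ⟨⟨0, hn⟩⟩
  have : NormOneClass (Matrix (Fin n) (Fin n) ℂ) := Matrix.linfty_opNormOneClass
  set A := K.map Complex.ofReal with hA
  have hten : Tendsto (fun w : ℕ => ((b : ℂ) ^ w) • A ^ w) atTop (nhds 0) := by
    refine tendsto_pi_nhds.2 fun i => tendsto_pi_nhds.2 fun j => ?_
    have h2 := (Complex.continuous_ofReal.tendsto 0).comp (h i j)
    refine (h2.congr fun w => ?_).trans (by simp)
    simp [hA, map_ofReal_pow]
  have hnorm := hten.norm
  rw [norm_zero] at hnorm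
  obtain ⟨w, hw, hw0⟩ :=
    ((hnorm.eventually_lt_const one_pos).and (eventually_gt_atTop 0)).exists
  obtain ⟨k, hk, hkeq⟩ := spectrum.exists_nnnorm_eq_spectralRadius A
  have hρ : specRad K = ‖k‖ := by
    rw [specRad, ← hA, ← hkeq]
    simp
  have hle : ‖k‖ ^ w ≤ ‖A ^ w‖ := by
    rw [← norm_pow]
    exact spectrum.norm_le_norm_of_mem (spectrum.pow_mem_pow A w hk)
  rw [norm_smul, norm_pow, Complex.norm_real, Real.norm_eq_abs, abs_of_pos hb] at hw
  refine lt_of_pow_lt_pow_left₀ w zero_le_one ?_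
  rw [one_pow, hρ, mul_pow]
  exact (mul_le_mul_of_nonneg_left hle (pow_pos hb w).le).trans_lt hw

/-- For a nonnegative matrix `K`, a strictly positive vector `d` and `b > 0`, the
scalar series `∑ b^w dᵀ K^w p` converges for every probability vector `p` if and
only if `b · ρ(K) < 1`. -/
theorem scalar_series_convergence (n : ℕ) (K : Matrix (Fin n) (Fin n) ℝ)
    (hK : ∀ i j, 0 ≤ K i j) (d : Fin n → ℝ) (hd : ∀ i, 0 < d i)
    (b : ℝ) (hb : 0 < b) :
    (∀ p : Fin n → ℝ, (∀ i, 0 ≤ p i) → (∑ i, p i) = 1 →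
        ∃ L : ℝ, Tendsto (fun η : ℕ => ∑ w ∈ Finset.range η,
          b ^ w * (d ⬝ᵥ (K ^ w).mulVec p)) atTop (nhds L)) ↔
      b * specRad K < 1 := by
  constructor
  · intro h
    refine mul_specRad_lt_one K hb fun i j => ?_
    obtain ⟨L, hL⟩ := h (Pi.single j 1)
      (fun i => by rw [Pi.single_apply]; split_ifs <;> norm_num) (by simp)
    -- The terms of a convergent series are differences of consecutive partial sums.
    have hterm : Tendsto (fun w : ℕ => b ^ w * (d ⬝ᵥ (K ^ w).mulVec (Pi.single j 1)))
        atTop (nhds 0) := by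
      have h1 := ((tendsto_add_atTop_iff_nat 1).2 hL).sub hL
      rw [sub_self] at h1
      refine h1.congr fun w => ?_
      rw [Finset.sum_range_succ]
      ring
    have hdiv := hterm.div_const (d i)
    rw [zero_div] at hdiv
    refine squeeze_zero
      (fun w => mul_nonneg (pow_pos hb w).le (pow_entry_nonneg hK w i j)) (fun w => ?_) hdiv
    rw [le_div_iff₀ (hd i), mul_assoc]
    refine mul_le_mul_of_nonneg_left ?_ (pow_pos hb w).le
    rw [Matrix.mulVec_single_one, mul_comm]
    exact Finset.single_le_sum (f := fun i => d i * (K ^ w) i j)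
      (fun i _ => mul_nonneg (hd i).le (pow_entry_nonneg hK w i j)) (Finset.mem_univ i)
  · intro h p _ _
    have hs : Summable fun w : ℕ => b ^ w * (d ⬝ᵥ (K ^ w).mulVec p) := by
      have hsum : Summable fun w : ℕ => ∑ i, ∑ j, d i * p j * (b ^ w * (K ^ w) i j) :=
        summable_sum fun i _ => summable_sum fun j _ => (summable_entry K hb h i j).mul_left _
      refine hsum.congr fun w => ?_
      simp only [dotProduct, Matrix.mulVec, Finset.mul_sum]
      exact Finset.sum_congr rfl fun i _ => Finset.sum_congr rfl fun j _ => by ring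
    exact ⟨_, hs.hasSum.tendsto_sum_nat⟩
end

section
/- Let n ∈ ℕ, let P₀ and P₁ be n×n real column-stochastic matrices (entrywise nonnegative with each column summing to 1), let e ∈ [0,1]ⁿ, let E := diag(e) and d := 1 − e (entrywise), and let p ∈ ℝⁿ be a probability vector. Let c ∈ (0,1), B > 0, N ≥ 0, D ∈ ℕ, and suppose ρ(P₁E) < 1. Let μ be the smallest integer w ≥ D such that c^{2w} N ≤ B. Then ∑_{w=D}^∞ max{c^{2w} N, B} · dᵀ (P₁E)^{w−D} P₀^D p = B · dᵀ (P₁E)^{μ−D} (I − P₁E)⁻¹ P₀^D p + N · ( c^{2D} dᵀ (I − c²P₁E)⁻¹ P₀^D p − c^{2μ} dᵀ (P₁E)^{μ−D} (I − c²P₁E)⁻¹ P₀^D p ). -/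
/-!
Put `A = P₁E`. Since the spectral radius of `A` is below `1`, Gelfand's formula gives `A ^ k → 0`
(`tendsto_pow_of_specRad_lt_one`), hence also `(c²A) ^ k → 0`, and both `1 - A` and `1 - c²A` are
invertible (`isUnit_det_one_sub_of_tendsto_pow`). As `c ^ (2w) N` decreases in `w`, the maximum is
`c ^ (2w) N` for `w < μ` and `B` for `w ≥ μ`. The partial sum up to `η ≥ μ` is therefore a finite
geometric sum in `c²A` plus one in `A`; the only term depending on `η` contains the factor
`A ^ (η - D)`, which tends to `0`.
-/

open Matrix Filter

/-- A real square matrix is column stochastic if it is entrywise nonnegative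
with each column summing to 1. -/
def ColStochastic {n : ℕ} (P : Matrix (Fin n) (Fin n) ℝ) : Prop :=
  (∀ i j, 0 ≤ P i j) ∧ ∀ j, (∑ i, P i j) = 1

section MatrixPowers

attribute [local instance] Matrix.linftyOpNormedRing Matrix.linftyOpNormedAlgebra

/-- Gelfand's formula bounds `‖A ^ k‖` by `r ^ k` eventually, for any `r` strictly between the
spectral radius and `1`. -/
theorem tendsto_pow_of_specRad_lt_one {n : ℕ} (A : Matrix (Fin n) (Fin n) ℝ)
    (h : specRad A < 1) : Tendsto (fun k : ℕ => A ^ k) atTop (nhds 0) := by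
  set M : Matrix (Fin n) (Fin n) ℂ := A.map Complex.ofReal with hM
  -- `specRad` goes through `ENNReal.toReal`, so the value `∞` has to be excluded.
  have hfin : spectralRadius ℂ M ≠ ⊤ := by
    refine ne_top_of_le_ne_top ?_ (spectrum.spectralRadius_le_pow_nnnorm_pow_one_div ℂ M 0)
    simp [ENNReal.mul_eq_top]
  have hlt : spectralRadius ℂ M < 1 := by
    rw [← ENNReal.toReal_lt_toReal hfin ENNReal.one_ne_top]
    simpa [specRad] using h
  obtain ⟨r, hr1, hr2⟩ := ENNReal.lt_iff_exists_nnreal_btwn.1 hlt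
  have hr : r < 1 := by exact_mod_cast hr2
  have hbound : ∀ᶠ k : ℕ in atTop, ‖M ^ k‖ ≤ (r : ℝ) ^ k := by
    filter_upwards [(spectrum.pow_nnnorm_pow_one_div_tendsto_nhds_spectralRadius M).eventually_lt_const
      hr1, eventually_gt_atTop 0] with k hk hk0
    have hk' : (0 : ℝ) < k := by exact_mod_cast hk0
    rw [one_div, ENNReal.rpow_inv_lt_iff hk', ENNReal.rpow_natCast] at hk
    have : ‖M ^ k‖₊ < r ^ k := by exact_mod_cast hk
    exact_mod_cast this.le
  have hM0 : Tendsto (fun k : ℕ => M ^ k) atTop (nhds 0) :=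
    squeeze_zero_norm' hbound (tendsto_pow_atTop_nhds_zero_of_lt_one r.2 (by exact_mod_cast hr))
  have hre : ∀ k, (M ^ k).map Complex.re = A ^ k := by
    intro k
    have : M ^ k = (A ^ k).map Complex.ofReal :=
      (map_pow (Complex.ofRealHom.mapMatrix) A k).symm
    rw [this]
    ext i j
    simp
  have hc : Continuous fun X : Matrix (Fin n) (Fin n) ℂ => X.map Complex.re :=
    continuous_id.matrix_map Complex.continuous_re
  have := (hc.tendsto 0).comp hM0
  simpa [Function.comp_def, hre] using this

end MatrixPowers

/-- Since `(1 - A) * ∑_{i<k} A ^ i = 1 - A ^ k → 1`, the determinant of `1 - A` cannot vanish. -/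
theorem isUnit_det_one_sub_of_tendsto_pow {n : ℕ} (A : Matrix (Fin n) (Fin n) ℝ)
    (h : Tendsto (fun k : ℕ => A ^ k) atTop (nhds 0)) : IsUnit (1 - A).det := by
  have hc : Continuous fun X : Matrix (Fin n) (Fin n) ℝ => (1 - X).det :=
    (continuous_const.sub continuous_id).matrix_det
  have h1 : Tendsto (fun k : ℕ => (1 - A ^ k).det) atTop (nhds 1) := by
    simpa [Function.comp_def] using (hc.tendsto 0).comp h
  obtain ⟨k, hk⟩ := (h1.eventually_ne one_ne_zero).exists
  rw [← mul_neg_geom_sum, det_mul] at hk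
  exact (left_ne_zero_of_mul hk).isUnit

theorem geom_sum_eq_mul_inv {n : ℕ} (A : Matrix (Fin n) (Fin n) ℝ)
    (h : IsUnit (1 - A).det) (k : ℕ) :
    ∑ i ∈ Finset.range k, A ^ i = (1 - A ^ k) * (1 - A)⁻¹ := by
  rw [← geom_sum_mul_neg, Matrix.mul_nonsing_inv_cancel_right _ _ h]

/-- Closed form of the series `∑_{w=D}^∞ max{c^{2w}N, B} · Ω_D(w,p)` with
`Ω_D(w,p) = dᵀ(P₁E)^{w-D} P₀^D p`, where `μ` is the smallest integer `w ≥ D`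
such that `c^{2w} N ≤ B`. -/
theorem max_weighted_series_closed_form (n : ℕ) (P0 P1 : Matrix (Fin n) (Fin n) ℝ)
    (hP0 : ColStochastic P0) (hP1 : ColStochastic P1)
    (e : Fin n → ℝ) (he : ∀ i, e i ∈ Set.Icc (0 : ℝ) 1)
    (p : Fin n → ℝ) (hp : (∀ i, 0 ≤ p i) ∧ (∑ i, p i) = 1)
    (c B N : ℝ) (hc : c ∈ Set.Ioo (0 : ℝ) 1) (hB : 0 < B) (hN : 0 ≤ N)
    (D μ : ℕ)
    (hρ : specRad (P1 * Matrix.diagonal e) < 1)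
    (hμ : IsLeast {w : ℕ | D ≤ w ∧ c ^ (2 * w) * N ≤ B} μ) :
    Tendsto (fun η : ℕ => ∑ w ∈ Finset.Ico D η,
        max (c ^ (2 * w) * N) B *
          ((fun i => 1 - e i) ⬝ᵥ
            (((P1 * Matrix.diagonal e) ^ (w - D)) * P0 ^ D).mulVec p))
      atTop
      (nhds (B * ((fun i => 1 - e i) ⬝ᵥ
            (((P1 * Matrix.diagonal e) ^ (μ - D)) * (1 - P1 * Matrix.diagonal e)⁻¹
              * P0 ^ D).mulVec p)
        + N * (c ^ (2 * D) * ((fun i => 1 - e i) ⬝ᵥ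
              ((1 - (c ^ 2) • (P1 * Matrix.diagonal e))⁻¹ * P0 ^ D).mulVec p)
          - c ^ (2 * μ) * ((fun i => 1 - e i) ⬝ᵥ
              (((P1 * Matrix.diagonal e) ^ (μ - D))
                * (1 - (c ^ 2) • (P1 * Matrix.diagonal e))⁻¹ * P0 ^ D).mulVec p)))) := by
  obtain ⟨hc0, hc1⟩ := hc
  obtain ⟨⟨hDμ, hμB⟩, hmin⟩ := hμ
  set A := P1 * Matrix.diagonal e with hA
  have hA0 := tendsto_pow_of_specRad_lt_one A hρ
  have hcA0 : Tendsto (fun k : ℕ => ((c ^ 2) • A) ^ k) atTop (nhds 0) := by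
    have h2 : Tendsto (fun k : ℕ => (c ^ 2) ^ k) atTop (nhds 0) :=
      tendsto_pow_atTop_nhds_zero_of_lt_one (by positivity) (by nlinarith)
    simpa [smul_pow] using h2.smul hA0
  have hgA := geom_sum_eq_mul_inv A (isUnit_det_one_sub_of_tendsto_pow A hA0)
  have hgcA := geom_sum_eq_mul_inv _ (isUnit_det_one_sub_of_tendsto_pow _ hcA0)
  -- All matrix expressions enter through the linear functional `X ↦ dᵀ X P₀ᴰ p`.
  let L : Matrix (Fin n) (Fin n) ℝ →ₗ[ℝ] ℝ :=
    { toFun := fun X => (fun i => 1 - e i) ⬝ᵥ (X * P0 ^ D).mulVec p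
      map_add' := fun X Y => by simp only [add_mul, add_mulVec, dotProduct_add]
      map_smul' := fun r X => by
        simp only [smul_mul_assoc, smul_mulVec, dotProduct_smul, RingHom.id_apply] }
  have hL : Continuous L := L.continuous_of_finiteDimensional
  change Tendsto (fun η : ℕ => ∑ w ∈ Finset.Ico D η,
      max (c ^ (2 * w) * N) B * L (A ^ (w - D))) atTop
    (nhds (B * L (A ^ (μ - D) * (1 - A)⁻¹) + N * (c ^ (2 * D) * L ((1 - (c ^ 2) • A)⁻¹)
      - c ^ (2 * μ) * L (A ^ (μ - D) * (1 - (c ^ 2) • A)⁻¹))))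
  have hhead : ∑ w ∈ Finset.Ico D μ, max (c ^ (2 * w) * N) B * L (A ^ (w - D)) =
      N * (c ^ (2 * D) * L ((1 - (c ^ 2) • A)⁻¹)
        - c ^ (2 * μ) * L (A ^ (μ - D) * (1 - (c ^ 2) • A)⁻¹)) := by
    have hterm : ∀ w ∈ Finset.Ico D μ, max (c ^ (2 * w) * N) B * L (A ^ (w - D)) =
        N * c ^ (2 * D) * L (((c ^ 2) • A) ^ (w - D)) := by
      intro w hw
      obtain ⟨hDw, hwμ⟩ := Finset.mem_Ico.1 hw
      have hBw : B ≤ c ^ (2 * w) * N := by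
        by_contra! hlt
        exact absurd (hmin ⟨hDw, hlt.le⟩) (not_le.2 hwμ)
      obtain ⟨k, rfl⟩ := Nat.exists_eq_add_of_le hDw
      rw [max_eq_left hBw, Nat.add_sub_cancel_left, smul_pow, map_smul, smul_eq_mul]
      ring
    rw [Finset.sum_congr rfl hterm, ← Finset.mul_sum, ← map_sum, Finset.sum_Ico_eq_sum_range]
    simp only [Nat.add_sub_cancel_left]
    rw [hgcA, sub_mul, one_mul, map_sub, smul_pow, smul_mul_assoc, map_smul, smul_eq_mul]
    obtain ⟨m, rfl⟩ := Nat.exists_eq_add_of_le hDμ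
    rw [Nat.add_sub_cancel_left]
    ring
  have htail : ∀ η, μ ≤ η → ∑ w ∈ Finset.Ico μ η, max (c ^ (2 * w) * N) B * L (A ^ (w - D)) =
      B * L (A ^ (μ - D) * (1 - A)⁻¹) - B * L (A ^ (η - D) * (1 - A)⁻¹) := by
    intro η hη
    have hterm : ∀ w ∈ Finset.Ico μ η, max (c ^ (2 * w) * N) B * L (A ^ (w - D)) =
        B * L (A ^ (w - D)) := by
      intro w hw
      have hwB : c ^ (2 * w) * N ≤ B :=
        (mul_le_mul_of_nonneg_right (pow_le_pow_of_le_one hc0.le hc1.le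
          (Nat.mul_le_mul_left 2 (Finset.mem_Ico.1 hw).1)) hN).trans hμB
      rw [max_eq_right hwB]
    have hsplit : ∀ m, D ≤ m → ∑ w ∈ Finset.Ico D m, A ^ (w - D) = (1 - A ^ (m - D)) * (1 - A)⁻¹ := by
      intro m _
      rw [Finset.sum_Ico_eq_sum_range, ← hgA]
      simp only [Nat.add_sub_cancel_left]
    have hdiff : ∑ w ∈ Finset.Ico μ η, A ^ (w - D) =
        A ^ (μ - D) * (1 - A)⁻¹ - A ^ (η - D) * (1 - A)⁻¹ := by
      have h := Finset.sum_Ico_consecutive (fun w => A ^ (w - D)) hDμ hη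
      rw [hsplit μ hDμ, hsplit η (hDμ.trans hη)] at h
      rw [eq_sub_of_add_eq' h]
      noncomm_ring
    rw [Finset.sum_congr rfl hterm, ← Finset.mul_sum, ← map_sum, hdiff, map_sub, mul_sub]
  have hlim : Tendsto (fun η : ℕ => L (A ^ (η - D) * (1 - A)⁻¹)) atTop (nhds 0) := by
    have hcont : Continuous fun X => L (X * (1 - A)⁻¹) :=
      hL.comp (continuous_id.matrix_mul continuous_const)
    simpa [Function.comp_def] using
      (hcont.tendsto 0).comp (hA0.comp (tendsto_sub_atTop_nat D))
  have hmain := ((hlim.const_mul B).const_sub (B * L (A ^ (μ - D) * (1 - A)⁻¹))).add_const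
    (N * (c ^ (2 * D) * L ((1 - (c ^ 2) • A)⁻¹)
      - c ^ (2 * μ) * L (A ^ (μ - D) * (1 - (c ^ 2) • A)⁻¹)))
  rw [mul_zero, sub_zero] at hmain
  refine hmain.congr' ?_
  filter_upwards [eventually_ge_atTop μ] with η hη
  rw [← Finset.sum_Ico_consecutive _ hDμ hη, hhead, htail η hη]
  ring
end

section
/- Let a, ā, c, M ∈ ℝ with a² > 1, 0 < ā² < c² < 1, M > 0; set M̄ := M/(a²−1) and B₀ := M̄·log(a²)/log(c²/ā²). Then for every y ∈ (0, B₀) and every integer w ≥ 1, l₁(w,y) := ā^{2w} y + M̄(a^{2w}−1) − c^{2w} y > 0. -/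
/-!
Write `L = log (c² / ā²)`. The bound `log x ≤ x - 1` gives both
`c^{2w} - ā^{2w} ≤ c^{2w} log (c^{2w} / ā^{2w}) ≤ w L` (taking `x = ā^{2w} / c^{2w}` and using
`c² < 1`) and `w log (a²) ≤ a^{2w} - 1`. Since `y < B₀` means `y L < M̄ log (a²)`,
`(c^{2w} - ā^{2w}) y ≤ w L y < w M̄ log (a²) ≤ M̄ (a^{2w} - 1)`.
-/

/-- On `(0, 1]` the logarithm has slope at least `1`. -/
lemma sub_le_log_sub_log {p q : ℝ} (hp : 0 < p) (hpq : p ≤ q) (hq : q ≤ 1) :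
    q - p ≤ Real.log q - Real.log p := by
  have hq0 : 0 < q := hp.trans_le hpq
  have h := Real.log_le_sub_one_of_pos (div_pos hp hq0)
  rw [Real.log_div hp.ne' hq0.ne'] at h
  have h' : q - p ≤ 1 - p / q := by
    have e : q - p = q * (1 - p / q) := by field_simp
    have : 0 ≤ 1 - p / q := sub_nonneg.2 ((div_le_one hq0).2 hpq)
    rw [e]
    exact mul_le_of_le_one_left this hq
  linarith

/-- The branch `l₁(w,y) = ā^{2w} y + M̄(a^{2w}-1) - c^{2w} y` of the open-loop
performance function is strictly positive for every `y ∈ (0, B₀)` and every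
integer `w ≥ 1`, where `B₀ = M̄·log(a²)/log(c²/ā²)`. -/
theorem l1_positive (a abar c M : ℝ)
    (ha : 1 < a ^ 2) (h1 : 0 < abar ^ 2) (h2 : abar ^ 2 < c ^ 2) (h3 : c ^ 2 < 1)
    (hM : 0 < M) :
    ∀ y ∈ Set.Ioo 0 ((M / (a ^ 2 - 1)) * Real.log (a ^ 2) / Real.log (c ^ 2 / abar ^ 2)),
      ∀ w : ℕ, 1 ≤ w →
        0 < (abar ^ 2) ^ w * y + (M / (a ^ 2 - 1)) * ((a ^ 2) ^ w - 1) - (c ^ 2) ^ w * y := by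
  rintro y ⟨hy0, hy⟩ w hw
  have hc0 : 0 < c ^ 2 := h1.trans h2
  have hL : 0 < Real.log (c ^ 2 / abar ^ 2) := Real.log_pos ((one_lt_div h1).2 h2)
  have hMbar : 0 < M / (a ^ 2 - 1) := div_pos hM (by linarith)
  have hw0 : (0 : ℝ) < w := by exact_mod_cast hw
  rw [lt_div_iff₀ hL, Real.log_div hc0.ne' h1.ne'] at hy
  have hdiff := sub_le_log_sub_log (pow_pos h1 w) (pow_le_pow_left₀ h1.le h2.le w)
    (pow_le_one₀ hc0.le h3.le)
  have hgrow := Real.log_le_sub_one_of_pos (pow_pos (one_pos.trans ha) w)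
  rw [Real.log_pow] at hgrow
  rw [Real.log_pow (c ^ 2) w, Real.log_pow (abar ^ 2) w] at hdiff
  have e1 := mul_le_mul_of_nonneg_right hdiff hy0.le
  have e2 := mul_lt_mul_of_pos_left hy hw0
  have e3 := mul_le_mul_of_nonneg_left hgrow hMbar.le
  linarith
end

section
/- Let a, ā, c, M ∈ ℝ with a² > 1, 0 < ā² < c² < 1, M > 0; set M̄ := M/(a²−1) and B₀ := M̄·log(a²)/log(c²/ā²). There exists B* ≥ B₀ such that for every B > B*, the open-loop performance function H(w,y) := ā^{2w} y + M̄(a^{2w}−1) − max{c^{2w} y, B} is sign-monotone: for every y ≥ 0 and all integers 1 ≤ w ≤ s, H(w,y) > 0 implies H(s,y) > 0. -/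
/-!
Write `p = ā²`, `q = c²`, `A = a²`, `K = M̄`, so `0 < p < q < 1 < A`. Then `H(w,y) > 0` says that both
`F(w) = K (A^w - 1) - (q^w - p^w) y` and `G(w) = p^w y + K (A^w - 1) - B` are positive, and it is
enough to pass from `w` to `w + 1`.

* Positivity of `F` always propagates: `(A^w - 1) / w` is nondecreasing and `(q^w - p^w) / w` is
  nonincreasing in `w ≥ 1` (`lower_step`, `upper_step`, `F_step`).
* With `r = q / p > 1`, positivity of `F(w)` gives `(r^w - 1) p^w y < K (A^w - 1)`. Once `w` is at
  least some `N` with `r^N` large, this forces `G(w) < G(w + 1)`. For `w ≤ N` it bounds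
  `p^w y + K (A^w - 1)` by a constant, so `G(w) > 0` is impossible when `B` exceeds that constant
  (`G_step`). The threshold `B*` is the maximum of `B₀` and this constant.
-/

lemma mul_pow_mul_sub_le {p q : ℝ} (hp : 0 < p) (hpq : p < q) (n : ℕ) :
    n * (p ^ n * (q - p)) ≤ p * (q ^ n - p ^ n) := by
  induction n with
  | zero => simp
  | succ n ih =>
    have hle : p ^ n ≤ q ^ n := pow_le_pow_left₀ hp.le hpq.le n
    have e1 := mul_le_mul_of_nonneg_left ih hp.le
    have e2 : 0 ≤ p * ((q ^ n - p ^ n) * (q - p)) :=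
      mul_nonneg hp.le (mul_nonneg (by linarith) (by linarith))
    push_cast
    rw [pow_succ, pow_succ]
    linarith

lemma sub_one_le_mul_pow {A : ℝ} (hA : 1 < A) (n : ℕ) :
    A ^ n - 1 ≤ n * (A ^ n * (A - 1)) := by
  induction n with
  | zero => simp
  | succ n ih =>
    have e1 : 1 ≤ A ^ n := one_le_pow₀ hA.le
    have e2 := mul_le_mul_of_nonneg_left ih (by linarith : (0 : ℝ) ≤ A)
    have e3 : 0 ≤ (A - 1) * (A * A ^ n - 1) :=
      mul_nonneg (by linarith) (by nlinarith)
    push_cast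
    rw [pow_succ]
    linarith

/-- `(q^n - p^n) / n` is nonincreasing, stated without division. -/
lemma lower_step {p q : ℝ} (hp : 0 < p) (hpq : p < q) (hq : q < 1) (n : ℕ) :
    n * (q ^ (n + 1) - p ^ (n + 1)) ≤ (n + 1) * (q ^ n - p ^ n) := by
  have h := mul_pow_mul_sub_le hp hpq n
  have hle : p ^ n ≤ q ^ n := pow_le_pow_left₀ hp.le hpq.le n
  have e1 : 0 ≤ (1 - p) * (q ^ n - p ^ n) := mul_nonneg (by linarith) (by linarith)
  have e2 : 0 ≤ (n : ℝ) * ((1 - q) * (q ^ n - p ^ n)) :=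
    mul_nonneg n.cast_nonneg (mul_nonneg (by linarith) (by linarith))
  rw [pow_succ, pow_succ]
  linarith

/-- `(A^n - 1) / n` is nondecreasing, stated without division. -/
lemma upper_step {A : ℝ} (hA : 1 < A) (n : ℕ) :
    (n + 1) * (A ^ n - 1) ≤ n * (A ^ (n + 1) - 1) := by
  have h := sub_one_le_mul_pow hA n
  rw [pow_succ]
  linarith

lemma F_step {p q A K y : ℝ} (hp : 0 < p) (hpq : p < q) (hq : q < 1) (hA : 1 < A)
    (hK : 0 < K) (hy : 0 ≤ y) {n : ℕ} (hn : 1 ≤ n)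
    (h : (q ^ n - p ^ n) * y < K * (A ^ n - 1)) :
    (q ^ (n + 1) - p ^ (n + 1)) * y < K * (A ^ (n + 1) - 1) := by
  have hn' : (0 : ℝ) < n := by exact_mod_cast hn
  have e1 := mul_le_mul_of_nonneg_right (lower_step hp hpq hq n) hy
  have e2 := mul_le_mul_of_nonneg_left (upper_step hA n) hK.le
  have e3 := mul_lt_mul_of_pos_left h (by linarith : (0 : ℝ) < n + 1)
  refine lt_of_mul_lt_mul_left ?_ hn'.le
  linarith

/-- Here `N` is the index from which `F > 0` forces `G` to increase; the hypothesis `hB` rules out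
`G > 0` at every index up to `N`. -/
lemma G_step {p r A K y B : ℝ} (hp : 0 < p) (hr : 1 < r) (hA : 1 < A)
    (hK : 0 < K) (hy : 0 ≤ y) {N n : ℕ} (hn : 1 ≤ n)
    (hN : 1 + 1 / (A - 1) < r ^ N) (hB : K * A ^ N / (r - 1) + K * A ^ N < B)
    (hF : (r ^ n - 1) * (p ^ n * y) < K * (A ^ n - 1))
    (hG : B < p ^ n * y + K * (A ^ n - 1)) :
    B < p ^ (n + 1) * y + K * (A ^ (n + 1) - 1) := by
  have hY : 0 ≤ p ^ n * y := by positivity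
  have hA1 : 0 < A - 1 := by linarith
  rcases le_total n N with hnN | hnN
  · exfalso
    have hrn : r ≤ r ^ n := le_self_pow₀ hr.le (by omega)
    have hAn : K * A ^ n ≤ K * A ^ N :=
      mul_le_mul_of_nonneg_left (pow_le_pow_right₀ hA.le hnN) hK.le
    have e1 : (r - 1) * (p ^ n * y) ≤ (r ^ n - 1) * (p ^ n * y) :=
      mul_le_mul_of_nonneg_right (by linarith) hY
    have e2 : p ^ n * y ≤ K * A ^ N / (r - 1) := by
      rw [le_div_iff₀ (by linarith)]
      linarith
    linarith
  · have hrn : r ^ N ≤ r ^ n := pow_le_pow_right₀ hr.le hnN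
    have e0 : 1 ≤ (A - 1) * (r ^ n - 1) := by
      have : 1 / (A - 1) ≤ r ^ n - 1 := by linarith
      rw [div_le_iff₀ hA1] at this
      linarith
    have e1 := mul_le_mul_of_nonneg_right e0 hY
    have e2 := mul_lt_mul_of_pos_left hF hA1
    have e3 : 0 < (A - 1) * K := by positivity
    have e4 : 0 ≤ p * (p ^ n * y) := by positivity
    rw [pow_succ, pow_succ]
    linarith

/-- **Sign monotonicity of the open-loop performance function.** There exists
`B* ≥ B₀` such that for every `B > B*`, the function
`H(w,y) = ā^{2w} y + M̄(a^{2w}-1) - max{c^{2w} y, B}` is sign-monotone: for all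
`y ≥ 0` and integers `1 ≤ w ≤ s`, `H(w,y) > 0` implies `H(s,y) > 0`. -/
theorem exists_Bstar_sign_monotone (a abar c M : ℝ)
    (ha : 1 < a ^ 2) (h1 : 0 < abar ^ 2) (h2 : abar ^ 2 < c ^ 2) (h3 : c ^ 2 < 1)
    (hM : 0 < M) :
    ∃ Bstar : ℝ,
      (M / (a ^ 2 - 1)) * Real.log (a ^ 2) / Real.log (c ^ 2 / abar ^ 2) ≤ Bstar ∧
      ∀ B : ℝ, Bstar < B → ∀ y : ℝ, 0 ≤ y → ∀ w s : ℕ, 1 ≤ w → w ≤ s →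
        0 < (abar ^ 2) ^ w * y + (M / (a ^ 2 - 1)) * ((a ^ 2) ^ w - 1)
              - max ((c ^ 2) ^ w * y) B →
        0 < (abar ^ 2) ^ s * y + (M / (a ^ 2 - 1)) * ((a ^ 2) ^ s - 1)
              - max ((c ^ 2) ^ s * y) B := by
  have hr : 1 < c ^ 2 / abar ^ 2 := by rwa [one_lt_div h1]
  have hK : 0 < M / (a ^ 2 - 1) := div_pos hM (by linarith)
  obtain ⟨N, hN⟩ := pow_unbounded_of_one_lt (1 + 1 / (a ^ 2 - 1)) hr
  have hqr : c ^ 2 = c ^ 2 / abar ^ 2 * abar ^ 2 := (div_mul_cancel₀ _ h1.ne').symm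
  generalize c ^ 2 / abar ^ 2 = r at *
  generalize M / (a ^ 2 - 1) = K at *
  generalize abar ^ 2 = p at *
  generalize c ^ 2 = q at *
  generalize a ^ 2 = A at *
  refine ⟨max (K * Real.log A / Real.log r) (K * A ^ N / (r - 1) + K * A ^ N),
    le_max_left _ _, ?_⟩
  intro B hB y hy w s hw hws h
  have hB' := (le_max_right _ _).trans_lt hB
  induction s, hws using Nat.le_induction with
  | base => exact h
  | succ n hwn ih =>
    obtain ⟨hF, hG⟩ := max_lt_iff.mp (sub_pos.mp ih)
    have hn : 1 ≤ n := hw.trans hwn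
    have hF1 : (q ^ n - p ^ n) * y < K * (A ^ n - 1) := by linarith
    have hF2 : (r ^ n - 1) * (p ^ n * y) < K * (A ^ n - 1) := by
      rw [hqr, mul_pow] at hF1
      linarith
    have hF' := F_step h1 h2 h3 ha hK hy hn hF1
    exact sub_pos.mpr (max_lt (by linarith)
      (G_step h1 hr ha hK hy hn hN hB' hF2 hG))
end

section
/- Let n ∈ ℕ, let P₁ be an n×n real column-stochastic matrix, let e ∈ [0,1)ⁿ, let E := diag(e) and d := 1 − e (entrywise). Let a, ā, c, M, B ∈ ℝ with a² > 1, 0 < ā² < c² < 1, M > 0, B > 0; set M̄ := M/(a²−1). Suppose a²·ρ(P₁E) < 1. Define the row-vector-valued function Z_θ(b) := b^θ dᵀ (I − bP₁E)⁻¹ for θ ∈ ℝ and b ∈ {ā², c², a², 1}, and Q(θ) := ( Z_θ(ā²) − Z_θ(c²) )·B·c^{−2θ} + M̄·( Z_θ(a²) − Z_θ(1) ). Then every component of θ ↦ Q(θ) is a strictly convex function on ℝ. -/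
/-!
The terms `Z_θ(c²)·c^{-2θ}` and `Z_θ(1)` do not depend on `θ`. Writing
`v(b) = dᵀ(I - bP₁E)⁻¹`, each component of `Q` is therefore, up to an additive constant,
`B·v(ā²)·(ā²/c²)^θ + M̄·v(a²)·(a²)^θ`. A function `θ ↦ s^θ` with `0 < s ≠ 1` is
strictly convex, so it suffices that `v(b)` is entrywise positive for `0 < b ≤ a²`.

Positivity comes from the Neumann series: by Gelfand's formula `b·ρ(P₁E) < 1` forces
`∑ₖ (bP₁E)ᵏ` to converge (`summable_pow_smul`), its sum is `(I - bP₁E)⁻¹`, and as all terms are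
entrywise nonnegative and the zeroth one is `I`, the row `v(b)` dominates `dᵀ > 0`
(`vecMul_inv_pos`).
-/

open Matrix

section Neumann

attribute [local instance] Matrix.linftyOpNormedRing Matrix.linftyOpNormedAlgebra

/-- Gelfand's formula applied to the complexification makes the Neumann series of `b • K`
converge. -/
lemma summable_pow_smul {n : ℕ} (K : Matrix (Fin n) (Fin n) ℝ) {b : ℝ} (hb : 0 < b)
    (h : b * specRad K < 1) : Summable (fun k : ℕ => (b • K) ^ k) := by
  rcases isEmpty_or_nonempty (Fin n) with hn | hn
  · exact summable_zero.congr fun k => Subsingleton.elim _ _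
  set L : Matrix (Fin n) (Fin n) ℂ := K.map Complex.ofReal with hL
  have hfin : spectralRadius ℂ L ≠ ⊤ :=
    ((spectrum.spectralRadius_le_nnnorm L).trans_lt ENNReal.coe_lt_top).ne
  have hlt : specRad K < 1 / b := by
    rw [lt_div_iff₀ hb, mul_comm]; exact h
  obtain ⟨r, hr1, hr2⟩ := exists_between hlt
  have hr0 : 0 < r := lt_of_le_of_lt ENNReal.toReal_nonneg hr1
  have hbr : b * r < 1 := by
    rw [lt_div_iff₀ hb, mul_comm] at hr2; exact hr2
  have hlt' : spectralRadius ℂ L < ENNReal.ofReal r :=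
    (ENNReal.lt_ofReal_iff_toReal_lt hfin).2 hr1
  have hev := (spectrum.pow_norm_pow_one_div_tendsto_nhds_spectralRadius L).eventually_lt_const hlt'
  have hsum : Summable (fun k : ℕ => ((b : ℂ) • L) ^ k) := by
    refine Summable.of_norm_bounded_eventually_nat
      (summable_geometric_of_lt_one (by positivity) hbr) ?_
    filter_upwards [hev, Filter.eventually_gt_atTop 0] with k hk hk0
    have h1 : ‖L ^ k‖ ^ (1 / k : ℝ) < r := (ENNReal.ofReal_lt_ofReal_iff hr0).1 hk
    have h2 : ‖L ^ k‖ ≤ r ^ k := by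
      have := pow_le_pow_left₀ (by positivity) h1.le k
      rwa [one_div, Real.rpow_inv_natCast_pow (norm_nonneg _) hk0.ne'] at this
    rw [smul_pow, norm_smul, norm_pow, Complex.norm_real, Real.norm_of_nonneg hb.le, mul_pow]
    gcongr
  have hmap : ∀ k : ℕ, ((b : ℂ) • L) ^ k = ((b • K) ^ k).map Complex.ofReal := by
    intro k
    have : (b : ℂ) • L = Complex.ofRealHom.mapMatrix (b • K) := by
      ext i j; simp [hL]
    rw [this, ← map_pow]; rfl
  refine Pi.summable.2 fun i => Pi.summable.2 fun j => ?_
  have := Pi.summable.1 (Pi.summable.1 hsum i) j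
  simp only [hmap, Matrix.map_apply] at this
  exact Complex.summable_ofReal.1 this

end Neumann

/-- A positive row vector stays positive under `(1 - b • K)⁻¹`, since this inverse is the
Neumann series of a nonnegative matrix. -/
lemma vecMul_inv_pos {n : ℕ} {K : Matrix (Fin n) (Fin n) ℝ} (hK : ∀ i j, 0 ≤ K i j)
    {d : Fin n → ℝ} (hd : ∀ i, 0 < d i) {b : ℝ} (hb : 0 < b) (h : b * specRad K < 1)
    (i : Fin n) : 0 < Matrix.vecMul d (1 - b • K)⁻¹ i := by
  have hs := summable_pow_smul K hb h
  have hinv : (1 - b • K)⁻¹ = ∑' k : ℕ, (b • K) ^ k :=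
    Matrix.inv_eq_left_inv hs.tsum_pow_mul_one_sub
  have hnn : ∀ k i j, 0 ≤ ((b • K) ^ k) i j :=
    fun k => Matrix.pow_apply_nonneg (A := b • K) (fun i j => mul_nonneg hb.le (hK i j)) k
  have hent : ∀ i j, (1 : Matrix (Fin n) (Fin n) ℝ) i j ≤ (1 - b • K)⁻¹ i j := by
    intro i j
    have hij : HasSum (fun k => ((b • K) ^ k) i j) ((1 - b • K)⁻¹ i j) := by
      rw [hinv]
      exact Pi.hasSum.1 (Pi.hasSum.1 hs.hasSum i) j
    have := le_hasSum hij 0 fun k _ => hnn k i j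
    simpa using this
  calc 0 < d i := hd i
    _ = Matrix.vecMul d 1 i := by rw [Matrix.vecMul_one]
    _ ≤ _ := by
      simp only [Matrix.vecMul, dotProduct]
      exact Finset.sum_le_sum fun j _ => mul_le_mul_of_nonneg_left (hent j i) (hd j).le

lemma strictConvexOn_mul_const_rpow {s w : ℝ} (hs : 0 < s) (hs1 : s ≠ 1) (hw : 0 < w) :
    StrictConvexOn ℝ Set.univ (fun θ : ℝ => w * s ^ θ) := by
  refine ⟨convex_univ, fun x _ y _ hxy p q hp hq hpq => ?_⟩
  have hlog : Real.log s ≠ 0 := Real.log_ne_zero_of_pos_of_ne_one hs hs1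
  have := strictConvexOn_exp.2 (Set.mem_univ (Real.log s * x)) (Set.mem_univ (Real.log s * y))
    (fun h => hxy (mul_left_cancel₀ hlog h)) hp hq hpq
  simp only [Real.rpow_def_of_pos hs, smul_eq_mul] at this ⊢
  calc w * Real.exp (Real.log s * (p * x + q * y))
      = w * Real.exp (p * (Real.log s * x) + q * (Real.log s * y)) := by ring_nf
    _ < w * (p * Real.exp (Real.log s * x) + q * Real.exp (Real.log s * y)) :=
      mul_lt_mul_of_pos_left this hw
    _ = _ := by ring

/-- Every component of `θ ↦ Q(θ)`, where
`Q(θ) = (Z_θ(ā²) - Z_θ(c²))·B·c^{-2θ} + M̄·(Z_θ(a²) - Z_θ(1))` and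
`Z_θ(b) = b^θ dᵀ(I - bP₁E)⁻¹` (real exponents), is strictly convex on `ℝ`. -/
theorem Q_components_strictly_convex (n : ℕ) (P1 : Matrix (Fin n) (Fin n) ℝ)
    (hP1 : ColStochastic P1)
    (e : Fin n → ℝ) (he : ∀ i, e i ∈ Set.Ico (0 : ℝ) 1)
    (a abar c M B : ℝ)
    (ha : 1 < a ^ 2) (h1 : 0 < abar ^ 2) (h2 : abar ^ 2 < c ^ 2) (h3 : c ^ 2 < 1)
    (hM : 0 < M) (hB : 0 < B)
    (hρ : a ^ 2 * specRad (P1 * Matrix.diagonal e) < 1) :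
    ∀ i : Fin n, StrictConvexOn ℝ Set.univ (fun θ : ℝ =>
      let PE := P1 * Matrix.diagonal e
      let d : Fin n → ℝ := fun i => 1 - e i
      let Z : ℝ → Fin n → ℝ := fun b => (b ^ θ) • Matrix.vecMul d (1 - b • PE)⁻¹
      let Mbar : ℝ := M / (a ^ 2 - 1)
      (Z (abar ^ 2) - Z (c ^ 2)) i * (B / (c ^ 2) ^ θ)
        + Mbar * ((Z (a ^ 2) - Z 1) i)) := by
  intro i
  have hK : ∀ i j, 0 ≤ (P1 * Matrix.diagonal e) i j := fun i j => by
    rw [Matrix.mul_diagonal]; exact mul_nonneg (hP1.1 i j) (he j).1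
  have hd : ∀ i, 0 < 1 - e i := fun i => sub_pos.2 (he i).2
  have hρ0 : 0 ≤ specRad (P1 * Matrix.diagonal e) := ENNReal.toReal_nonneg
  have hva := vecMul_inv_pos hK hd (zero_lt_one.trans ha) hρ i
  have hvb := vecMul_inv_pos hK hd h1
    ((mul_le_mul_of_nonneg_right (h2.trans (h3.trans ha)).le hρ0).trans_lt hρ) i
  have hc : 0 < c ^ 2 := h1.trans h2
  have hM' : 0 < M / (a ^ 2 - 1) := div_pos hM (sub_pos.2 ha)
  set va := Matrix.vecMul (fun i => 1 - e i) (1 - a ^ 2 • (P1 * Matrix.diagonal e))⁻¹ i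
  set vb := Matrix.vecMul (fun i => 1 - e i) (1 - abar ^ 2 • (P1 * Matrix.diagonal e))⁻¹ i
  have hconv : StrictConvexOn ℝ Set.univ (fun θ : ℝ =>
      (B * vb) * (abar ^ 2 / c ^ 2) ^ θ + (M / (a ^ 2 - 1) * va) * (a ^ 2) ^ θ) := by
    have A1 := strictConvexOn_mul_const_rpow (div_pos h1 hc) ((div_lt_one hc).2 h2).ne
      (mul_pos hB hvb)
    have A2 := strictConvexOn_mul_const_rpow (zero_lt_one.trans ha) ha.ne' (mul_pos hM' hva)
    exact A1.add A2
  have hshift := hconv.add_const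
    (-(B * Matrix.vecMul (fun i => 1 - e i) (1 - c ^ 2 • (P1 * Matrix.diagonal e))⁻¹ i)
      - M / (a ^ 2 - 1) *
        Matrix.vecMul (fun i => 1 - e i) (1 - (1 : ℝ) • (P1 * Matrix.diagonal e))⁻¹ i)
  refine Eq.mp (congrArg (StrictConvexOn ℝ Set.univ) ?_) hshift
  funext θ
  have hcθ : (c ^ 2) ^ θ ≠ 0 := (Real.rpow_pos_of_pos hc θ).ne'
  simp only [Pi.add_apply, Pi.sub_apply, Pi.smul_apply, smul_eq_mul, Real.one_rpow,
    Real.div_rpow h1.le hc.le]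
  field_simp
  ring
end

section
/- Let n ∈ ℕ, let P₀ and P₁ be n×n real column-stochastic matrices, let e ∈ [0,1)ⁿ, let E := diag(e) and d := 1 − e (entrywise). Let a, ā, c, M, B ∈ ℝ with a² > 1, 0 < ā² < c² < 1, M > 0; set M̄ := M/(a²−1) and B₀ := M̄·log(a²)/log(c²/ā²), and suppose B ≥ B₀ and a²·ρ(P₁E) < 1. Define Z_θ(b) := b^θ dᵀ (I − bP₁E)⁻¹ and Q(θ) := ( Z_θ(ā²) − Z_θ(c²) )·B·c^{−2θ} + M̄·( Z_θ(a²) − Z_θ(1) ). Define, for θ ∈ ℕ with θ ≥ 1, γ ∈ {1,…,n}, y > 0: g̃_θ(b,γ) := b^θ dᵀ (I − bP₁E)⁻¹ P₀^{θ−1} P₁ δ_γ, ν := max{ θ, ⌈ log(y/B)/log(1/c²) ⌉ }, f̃_θ(b,γ) := b^ν dᵀ (P₁E)^{ν−θ} (I − bP₁E)⁻¹ P₀^{θ−1} P₁ δ_γ, and J(θ,y,γ) := g̃_θ(ā²,γ)·y + M̄·( g̃_θ(a²,γ) − g̃_θ(1,γ) ) − ( B·f̃_θ(1,γ) + y·(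 g̃_θ(c²,γ) − f̃_θ(c²,γ) ) ). If Q(D) < 0 entrywise for some D ∈ ℕ, then J(θ,y,γ) < 0 for all y > 0, all γ ∈ {1,…,n}, and all θ ∈ {1, …, D}. -/
/-!
Put `w k = dᵀ (P₁E)ᵏ v ≥ 0` with `v = P₀^(θ-1) P₁ δ_γ`. Since `a² ρ(P₁E) < 1`, Gelfand's formula
makes the Neumann series of `(I - b P₁E)⁻¹` converge for `0 ≤ b ≤ a²` (`hasSum_inv`), and since `ν`
is the first time `j ≥ θ` with `y c^(2j) ≤ B`,

  `J(θ,y,γ) = ∑ₖ w k * h (θ + k)`, `h j = ā^(2j) y + M̄ (a^(2j) - 1) - max B (y c^(2j))`.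

Likewise `Q(p) u = ∑ₖ coef p k * dᵀ (P₁E)ᵏ u`, and `h (p + k) ≤ coef p k` for all `y`
(`term_le_coef`). Hence the part of `J` from time `D` on is at most `Q(D) (P₁E)^(D-θ) v ≤ 0`.

The function `Q` itself need not be negative at all `θ ≤ D`, so the times `j < D` are treated one by
one: `h j ≤ coef j 0 = φ j` with `φ j = B ((ā²/c²)^j - 1) + M̄ (a^(2j) - 1)`, which is convex in `j`
and vanishes at `0`. If `φ j ≥ 0` for some `1 ≤ j ≤ D`, then `coef D k ≥ φ (D + k) ≥ 0` for all `k`,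
contradicting `Q(D) < 0` (`coef_zero_neg`). Strictness comes from `w 0 = dᵀ v > 0` if `θ < D`, and
from `v ≠ 0` if `θ = D`. The bound `B ≥ B₀` supplies `B > 0`.
-/

open Matrix

attribute [local instance] Matrix.linftyOpNormedRing Matrix.linftyOpNormedAlgebra in
/-- Gelfand's formula, in entrywise form: the entries of `K ^ k` are eventually at most `q ^ k`
for any `q` above the spectral radius. -/
lemma eventually_abs_pow_entry_le {n : ℕ} (K : Matrix (Fin n) (Fin n) ℝ) {q : ℝ}
    (hq : specRad K < q) :
    ∀ᶠ k : ℕ in Filter.atTop, ∀ i j, |(K ^ k) i j| ≤ q ^ k := by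
  set L : Matrix (Fin n) (Fin n) ℂ := K.map Complex.ofReal with hL
  have h0 : 0 ≤ specRad K := ENNReal.toReal_nonneg
  have hq0 : 0 < q := h0.trans_lt hq
  have hfin : spectralRadius ℂ L ≠ ⊤ := by
    refine ne_top_of_le_ne_top (b := (‖L‖₊ * ‖(1 : Matrix (Fin n) (Fin n) ℂ)‖₊ : NNReal))
      ENNReal.coe_ne_top ?_
    simpa using spectrum.spectralRadius_le_pow_nnnorm_pow_one_div ℂ L 0
  have hlt : spectralRadius ℂ L < ENNReal.ofReal q := by
    rw [ENNReal.lt_ofReal_iff_toReal_lt hfin]; exact hq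
  have ht := spectrum.pow_nnnorm_pow_one_div_tendsto_nhds_spectralRadius L
  filter_upwards [ht.eventually_lt_const hlt, Filter.eventually_gt_atTop 0] with k hk hk0 i j
  have hk' : (‖L ^ k‖₊ : ENNReal) ≤ ENNReal.ofReal q ^ k := by
    have := ENNReal.rpow_le_rpow hk.le (z := k) (by positivity)
    rwa [← ENNReal.rpow_mul, one_div, inv_mul_cancel₀ (by positivity), ENNReal.rpow_one,
      ENNReal.rpow_natCast] at this
  have hk2 : ‖L ^ k‖ ≤ q ^ k := by
    rw [← ENNReal.ofReal_pow hq0.le] at hk'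
    have := ENNReal.toReal_mono ENNReal.ofReal_ne_top hk'
    rwa [ENNReal.toReal_ofReal (by positivity)] at this
  refine le_trans ?_ hk2
  have hLk : (L ^ k) i j = (((K ^ k) i j : ℝ) : ℂ) := by
    have : L ^ k = (K ^ k).map Complex.ofReal := by
      exact (Matrix.map_pow K Complex.ofRealHom k).symm
    rw [this]; rfl
  have : |(K ^ k) i j| = ‖(L ^ k) i j‖ := by rw [hLk]; simp
  rw [this]
  have h1 : ‖(L ^ k) i j‖₊ ≤ ∑ j, ‖(L ^ k) i j‖₊ :=
    Finset.single_le_sum (f := fun j => ‖(L ^ k) i j‖₊) (fun _ _ => zero_le) (Finset.mem_univ j)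
  have h2 : ∑ j, ‖(L ^ k) i j‖₊ ≤ ‖L ^ k‖₊ := by
    rw [Matrix.linfty_opNNNorm_def]
    exact Finset.le_sup (f := fun i => ∑ j, ‖(L ^ k) i j‖₊) (Finset.mem_univ i)
  exact_mod_cast h1.trans h2

/-- Neumann series of the resolvent, valid on the whole range `0 ≤ b ≤ A` although the norm of
`b • K` need not be below `1`. -/
lemma hasSum_inv {n : ℕ} (K : Matrix (Fin n) (Fin n) ℝ) {A b : ℝ} (hA : 0 < A)
    (hK : A * specRad K < 1) (hb0 : 0 ≤ b) (hb : b ≤ A) :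
    HasSum (fun k => (b • K) ^ k) (1 - b • K)⁻¹ := by
  have hs : specRad K < A⁻¹ := by
    rwa [← one_div, lt_div_iff₀ hA, mul_comm]
  obtain ⟨q, hq1, hq2⟩ := exists_between hs
  have hq0 : 0 < q := lt_of_le_of_lt ENNReal.toReal_nonneg hq1
  have hAq : b * q < 1 := by
    calc b * q ≤ A * q := by gcongr
      _ < A * A⁻¹ := by gcongr
      _ = 1 := mul_inv_cancel₀ hA.ne'
  have hev := eventually_abs_pow_entry_le K hq1
  have hsum : Summable (fun k => (b • K) ^ k) := by
    refine Pi.summable.2 fun i => Pi.summable.2 fun j => ?_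
    refine Summable.of_norm_bounded_eventually_nat
      (summable_geometric_of_lt_one (by positivity) hAq) ?_
    filter_upwards [hev] with k hk
    rw [smul_pow, Matrix.smul_apply, smul_eq_mul, norm_mul, mul_pow, Real.norm_eq_abs,
      Real.norm_eq_abs, abs_of_nonneg (by positivity)]
    gcongr
    exact hk i j
  have := hsum.tsum_pow_mul_one_sub
  rw [Matrix.inv_eq_left_inv this]
  exact hsum.hasSum

/-- The series of both `g̃` (with `m = 0`) and `f̃` (with `m = ν - θ`, `p = ν`). -/
lemma hasSum_dot {n : ℕ} (K : Matrix (Fin n) (Fin n) ℝ) {A b : ℝ} (hA : 0 < A)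
    (hK : A * specRad K < 1) (hb0 : 0 ≤ b) (hb : b ≤ A) (d u : Fin n → ℝ) (m p : ℕ) :
    HasSum (fun k => b ^ (p + k) * (d ⬝ᵥ (K ^ (m + k)) *ᵥ u))
      (b ^ p * (d ⬝ᵥ (K ^ m * (1 - b • K)⁻¹) *ᵥ u)) := by
  let F : Matrix (Fin n) (Fin n) ℝ →+ ℝ :=
    { toFun := fun X => b ^ p * (d ⬝ᵥ (K ^ m * X) *ᵥ u)
      map_zero' := by simp
      map_add' := fun X Y => by rw [mul_add, add_mulVec, dotProduct_add, mul_add] }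
  have hF : Continuous F := by
    change Continuous fun X : Matrix (Fin n) (Fin n) ℝ => b ^ p * (d ⬝ᵥ (K ^ m * X) *ᵥ u)
    fun_prop
  have := (hasSum_inv K hA hK hb0 hb).map F hF
  refine this.congr_fun fun k => ?_
  change b ^ (p + k) * (d ⬝ᵥ (K ^ (m + k)) *ᵥ u) = b ^ p * (d ⬝ᵥ (K ^ m * (b • K) ^ k) *ᵥ u)
  rw [smul_pow, Matrix.mul_smul, ← pow_add, smul_mulVec, dotProduct_smul, smul_eq_mul, pow_add]
  ring

/-- Averages of the initial segments of a monotone sequence increase with the length: the discrete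
form of convexity used for `coef_zero_neg`. -/
lemma mul_sum_le_mul_sum {g : ℕ → ℝ} (hg : Monotone g) {m q : ℕ} (hmq : m ≤ q) :
    q * ∑ i ∈ Finset.range m, g i ≤ m * ∑ i ∈ Finset.range q, g i := by
  induction q, hmq using Nat.le_induction with
  | base => rfl
  | succ q hmq ih =>
    have h : ∑ i ∈ Finset.range m, g i ≤ m * g q := by
      have := Finset.sum_le_card_nsmul (Finset.range m) g (g q)
        (fun i hi => hg ((Finset.mem_range.1 hi).le.trans hmq))
      simpa using this
    rw [Finset.sum_range_succ]
    push_cast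
    linarith

/-- The coefficient of `dᵀ (P₁E)ᵏ` in the power series of `Q(p)`, where `x`, `C`, `A` stand for
`ā²`, `c²`, `a²` and `N` for `M̄`. -/
noncomputable def coef (B N x C A : ℝ) (p k : ℕ) : ℝ :=
  B / C ^ p * (x ^ (p + k) - C ^ (p + k)) + N * (A ^ (p + k) - 1)

/-- The coefficient of `J` at absolute time `p + k` is concave and piecewise linear in `y`; it is
bounded, for every `y`, through its behaviour on the two sides of `y = B / C ^ p`. -/
lemma term_le_coef {B N x C A y : ℝ} (hB : 0 < B) (hx : 0 < x) (hxC : x < C) (hC : C < 1)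
    (p k : ℕ) :
    x ^ (p + k) * y + N * (A ^ (p + k) - 1) - max B (y * C ^ (p + k)) ≤ coef B N x C A p k := by
  have hC0 : 0 < C := hx.trans hxC
  have hCp : 0 < C ^ p := by positivity
  have hle : x ^ (p + k) ≤ C ^ (p + k) := by gcongr
  unfold coef
  rcases le_total (B / C ^ p) y with h | h
  · have := le_max_right B (y * C ^ (p + k))
    nlinarith [mul_nonneg (sub_nonneg.2 h) (sub_nonneg.2 hle)]
  · have h1 := le_max_left B (y * C ^ (p + k))
    have h2 : B / C ^ p * C ^ (p + k) ≤ B := by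
      rw [pow_add, ← mul_assoc, div_mul_cancel₀ _ hCp.ne']
      exact mul_le_of_le_one_right hB.le (pow_le_one₀ hC0.le hC.le)
    have h3 : 0 < x ^ (p + k) := by positivity
    nlinarith [mul_nonneg (sub_nonneg.2 h) h3.le]

/-- One negative coefficient of `Q(p)` forces `coef m 0 < 0` for all `1 ≤ m ≤ p`. Indeed
`coef m 0 = φ m` for the convex sequence `φ m = B ((x/C)^m - 1) + N (A^m - 1)` with `φ 0 = 0`, and
`coef p k ≥ φ (p + k)`. -/
lemma coef_zero_neg {B N x C A : ℝ} (hB : 0 < B) (hN : 0 < N) (hx : 0 < x) (hxC : x < C)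
    (hC : C < 1) (hA : 1 < A) {p k m : ℕ} (hk : coef B N x C A p k < 0) (hm : 1 ≤ m)
    (hmp : m ≤ p) : coef B N x C A m 0 < 0 := by
  have hC0 : 0 < C := hx.trans hxC
  set r := x / C with hr
  have hr0 : 0 < r := by positivity
  have hr1 : r < 1 := (div_lt_one hC0).2 hxC
  have hxr : x = r * C := by rw [hr]; field_simp
  -- The increments of `φ`.
  set g : ℕ → ℝ := fun i => N * (A - 1) * A ^ i - B * (1 - r) * r ^ i with hg
  have hmono : Monotone g := by
    intro i j hij
    have h1 : A ^ i ≤ A ^ j := pow_le_pow_right₀ hA.le hij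
    have h2 : r ^ j ≤ r ^ i := pow_le_pow_of_le_one hr0.le hr1.le hij
    have h3 : 0 ≤ N * (A - 1) := mul_nonneg hN.le (by linarith)
    have h4 : 0 ≤ B * (1 - r) := mul_nonneg hB.le (by linarith)
    simp only [hg]
    gcongr
  have hsum : ∀ q, ∑ i ∈ Finset.range q, g i = B * (r ^ q - 1) + N * (A ^ q - 1) := by
    intro q
    induction q with
    | zero => simp
    | succ q ih => rw [Finset.sum_range_succ, ih]; simp only [hg]; ring
  have hcoef : ∀ q l, coef B N x C A q l =
      B * C ^ l * (r ^ (q + l) - 1) + N * (A ^ (q + l) - 1) := by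
    intro q l
    unfold coef
    rw [hxr]
    have : C ^ q ≠ 0 := by positivity
    rw [mul_pow, pow_add C]
    field_simp
  have hneg : B * (r ^ (p + k) - 1) + N * (A ^ (p + k) - 1) < 0 := by
    refine lt_of_le_of_lt ?_ hk
    rw [hcoef]
    have h1 : C ^ k ≤ 1 := pow_le_one₀ hC0.le hC.le
    have h2 : r ^ (p + k) ≤ 1 := pow_le_one₀ hr0.le hr1.le
    nlinarith [mul_nonneg hB.le (mul_nonneg (sub_nonneg.2 h1) (sub_nonneg.2 h2))]
  have key := mul_sum_le_mul_sum hmono (hmp.trans (Nat.le_add_right p k))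
  rw [hsum, hsum] at key
  have hm0 : (0 : ℝ) < m := by exact_mod_cast hm
  have hpk : (0 : ℝ) < (p + k : ℕ) := by exact_mod_cast (by omega : 0 < p + k)
  rw [hcoef]
  simp only [pow_zero, mul_one, add_zero]
  by_contra hcon
  have h1 := mul_nonneg hpk.le (not_lt.1 hcon)
  have h2 := mul_neg_of_pos_of_neg hm0 hneg
  linarith

/-- The ceiling in the definition of `ν` is the first time `j` at which `y * C ^ j ≤ B`. -/
lemma ceil_log_le_iff {B C y : ℝ} (hB : 0 < B) (hC0 : 0 < C) (hC : C < 1) (hy : 0 < y) (j : ℕ) :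
    (Int.ceil (Real.log (y / B) / Real.log (1 / C))).toNat ≤ j ↔ y * C ^ j ≤ B := by
  have hl : 0 < Real.log (1 / C) := Real.log_pos (by rw [lt_div_iff₀ hC0]; linarith)
  rw [Int.toNat_le, Int.ceil_le, div_le_iff₀ hl, Int.cast_natCast, ← Real.log_pow,
    Real.log_le_log_iff (by positivity) (by positivity), one_div, inv_pow, div_le_iff₀ hB,
    inv_mul_eq_div, le_div_iff₀ (by positivity)]

lemma hasSum_tail {f g : ℕ → ℝ} {s : ℝ} (m : ℕ) (hg : HasSum g s) (h : ∀ k, f (m + k) = g k) :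
    HasSum (fun k => if m ≤ k then f k else 0) s := by
  have hinj : Function.Injective (fun k => m + k) := add_right_injective m
  rw [← hinj.hasSum_iff]
  · refine hg.congr_fun fun k => ?_
    simp [h]
  · intro k hk
    rw [if_neg]
    intro hmk
    exact hk ⟨k - m, by simp; omega⟩


lemma matrix_pow_entry_nonneg {n : ℕ} {P : Matrix (Fin n) (Fin n) ℝ} (h : ∀ i j, 0 ≤ P i j)
    (k : ℕ) : ∀ i j, 0 ≤ (P ^ k) i j := by
  induction k with
  | zero =>
    intro i j
    rw [pow_zero, Matrix.one_apply]
    split_ifs <;> norm_num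
  | succ k ih =>
    intro i j
    rw [pow_succ, Matrix.mul_apply]
    exact Finset.sum_nonneg fun l _ => mul_nonneg (ih i l) (h l j)

lemma mulVec_entry_nonneg {n : ℕ} {P : Matrix (Fin n) (Fin n) ℝ} (h : ∀ i j, 0 ≤ P i j)
    {u : Fin n → ℝ} (hu : ∀ i, 0 ≤ u i) (i : Fin n) : 0 ≤ (P *ᵥ u) i := by
  change 0 ≤ ∑ j, P i j * u j
  exact Finset.sum_nonneg fun j _ => mul_nonneg (h i j) (hu j)

lemma ColStochastic.sum_mulVec {n : ℕ} {P : Matrix (Fin n) (Fin n) ℝ} (h : ColStochastic P)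
    (u : Fin n → ℝ) : ∑ i, (P *ᵥ u) i = ∑ i, u i := by
  simp only [Matrix.mulVec, dotProduct]
  rw [Finset.sum_comm]
  refine Finset.sum_congr rfl fun j _ => ?_
  rw [← Finset.sum_mul, h.2 j, one_mul]

lemma ColStochastic.sum_pow_mulVec {n : ℕ} {P : Matrix (Fin n) (Fin n) ℝ} (h : ColStochastic P)
    (u : Fin n → ℝ) (k : ℕ) : ∑ i, ((P ^ k) *ᵥ u) i = ∑ i, u i := by
  induction k with
  | zero => simp
  | succ k ih => rw [pow_succ', ← Matrix.mulVec_mulVec, h.sum_mulVec, ih]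

/-- **Sufficient condition for negativity of the performance-evaluation
function.** If `B ≥ B₀` and `Q(D) < 0` entrywise for some `D ∈ ℕ`, then the
closed form `J(θ,y,γ)` of the performance-evaluation function is negative for
all `y > 0`, all channel states `γ` and all `θ ∈ {1,…,D}`. -/
theorem pef_negative_of_Q_negative (n : ℕ) (P0 P1 : Matrix (Fin n) (Fin n) ℝ)
    (hP0 : ColStochastic P0) (hP1 : ColStochastic P1)
    (e : Fin n → ℝ) (he : ∀ i, e i ∈ Set.Ico (0 : ℝ) 1)
    (a abar c M B : ℝ)
    (ha : 1 < a ^ 2) (h1 : 0 < abar ^ 2) (h2 : abar ^ 2 < c ^ 2) (h3 : c ^ 2 < 1)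
    (hM : 0 < M)
    (hB : (M / (a ^ 2 - 1)) * Real.log (a ^ 2) / Real.log (c ^ 2 / abar ^ 2) ≤ B)
    (hρ : a ^ 2 * specRad (P1 * Matrix.diagonal e) < 1) :
    let PE := P1 * Matrix.diagonal e
    let d : Fin n → ℝ := fun i => 1 - e i
    let Mbar : ℝ := M / (a ^ 2 - 1)
    let Z : ℝ → ℝ → Fin n → ℝ := fun b θ => (b ^ θ) • Matrix.vecMul d (1 - b • PE)⁻¹
    let Q : ℝ → Fin n → ℝ := fun θ =>
      (B / (c ^ 2) ^ θ) • (Z (abar ^ 2) θ - Z (c ^ 2) θ) + Mbar • (Z (a ^ 2) θ - Z 1 θ)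
    let J : ℕ → ℝ → Fin n → ℝ := fun θ y γ =>
      let vγ : Fin n → ℝ := (P0 ^ (θ - 1) * P1).mulVec (Pi.single γ 1)
      let gt : ℝ → ℝ := fun b => b ^ θ * (d ⬝ᵥ ((1 - b • PE)⁻¹).mulVec vγ)
      let ν : ℕ := max θ (Int.ceil (Real.log (y / B) / Real.log (1 / c ^ 2))).toNat
      let ft : ℝ → ℝ := fun b =>
        b ^ ν * (d ⬝ᵥ ((PE ^ (ν - θ)) * (1 - b • PE)⁻¹).mulVec vγ)
      gt (abar ^ 2) * y + Mbar * (gt (a ^ 2) - gt 1)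
        - (B * ft 1 + y * (gt (c ^ 2) - ft (c ^ 2)))
    ∀ D : ℕ, (∀ i, Q (D : ℝ) i < 0) →
      ∀ θ : ℕ, 1 ≤ θ → θ ≤ D → ∀ γ : Fin n, ∀ y : ℝ, 0 < y → J θ y γ < 0 := by
  intro PE d Mbar Z Q J D hQ θ hθ hθD γ y hy
  have hC0 : 0 < c ^ 2 := h1.trans h2
  have hN : 0 < Mbar := div_pos hM (by linarith)
  have hB0 : 0 < B := by
    refine lt_of_lt_of_le (div_pos (mul_pos hN (Real.log_pos ha)) (Real.log_pos ?_)) hB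
    rwa [one_lt_div h1]
  have hA0 : 0 < a ^ 2 := by linarith
  have hd : ∀ i, 0 < d i := fun i => sub_pos.2 (he i).2
  have hPE : ∀ i j, 0 ≤ PE i j := by
    intro i j
    simp only [PE, Matrix.mul_diagonal]
    exact mul_nonneg (hP1.1 i j) (he j).1
  have hw0 : ∀ u : Fin n → ℝ, (∀ i, 0 ≤ u i) → ∀ k, 0 ≤ d ⬝ᵥ (PE ^ k) *ᵥ u := fun u hu k =>
    Finset.sum_nonneg fun i _ =>
      mul_nonneg (hd i).le (mulVec_entry_nonneg (matrix_pow_entry_nonneg hPE k) hu i)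
  -- The linear functional `Q(D)` as a series in the survival weights `d ⬝ᵥ PE ^ k *ᵥ u`.
  have hQsum : ∀ u : Fin n → ℝ,
      HasSum (fun k => coef B Mbar (abar ^ 2) (c ^ 2) (a ^ 2) D k * (d ⬝ᵥ (PE ^ k) *ᵥ u))
        (Q D ⬝ᵥ u) := by
    intro u
    have hx := hasSum_dot PE hA0 hρ h1.le (by linarith) d u 0 D
    have hc := hasSum_dot PE hA0 hρ hC0.le (by linarith) d u 0 D
    have hA := hasSum_dot PE hA0 hρ hA0.le le_rfl d u 0 D
    have ho := hasSum_dot PE hA0 hρ zero_le_one ha.le d u 0 D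
    have := ((hx.sub hc).mul_left (B / (c ^ 2) ^ D)).add ((hA.sub ho).mul_left Mbar)
    have hval : Q D ⬝ᵥ u = B / (c ^ 2) ^ D *
        ((abar ^ 2) ^ D * (d ⬝ᵥ (PE ^ 0 * (1 - abar ^ 2 • PE)⁻¹) *ᵥ u)
          - (c ^ 2) ^ D * (d ⬝ᵥ (PE ^ 0 * (1 - c ^ 2 • PE)⁻¹) *ᵥ u))
        + Mbar * ((a ^ 2) ^ D * (d ⬝ᵥ (PE ^ 0 * (1 - a ^ 2 • PE)⁻¹) *ᵥ u)
          - 1 ^ D * (d ⬝ᵥ (PE ^ 0 * (1 - (1 : ℝ) • PE)⁻¹) *ᵥ u)) := by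
      simp only [Q, Z, Real.rpow_natCast, pow_zero, Matrix.one_mul, add_dotProduct,
        smul_dotProduct, sub_dotProduct, dotProduct_mulVec, smul_eq_mul]
    rw [hval]
    refine this.congr_fun fun k => ?_
    simp only [coef, zero_add, one_pow]
    ring
  have hQle : ∀ u : Fin n → ℝ, (∀ i, 0 ≤ u i) → Q D ⬝ᵥ u ≤ 0 := fun u hu =>
    Finset.sum_nonpos fun i _ => mul_nonpos_of_nonpos_of_nonneg (hQ i).le (hu i)
  have hsingle : ∀ i, 0 ≤ (Pi.single γ 1 : Fin n → ℝ) i := fun i => by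
    rw [Pi.single_apply]; split_ifs <;> norm_num
  obtain ⟨k₀, hk₀⟩ : ∃ k, coef B Mbar (abar ^ 2) (c ^ 2) (a ^ 2) D k < 0 := by
    by_contra! hcon
    have := (hQsum (Pi.single γ 1)).nonneg fun k => mul_nonneg (hcon k) (hw0 _ hsingle k)
    rw [dotProduct_single, mul_one] at this
    exact absurd (hQ γ) (not_lt.2 this)
  have hneg : ∀ m, 1 ≤ m → m ≤ D → coef B Mbar (abar ^ 2) (c ^ 2) (a ^ 2) m 0 < 0 :=
    fun m hm hmD => coef_zero_neg hB0 hN h1 h2 h3 ha hk₀ hm hmD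
  simp only [J]
  set v : Fin n → ℝ := (P0 ^ (θ - 1) * P1) *ᵥ (Pi.single γ 1) with hv
  have hv0 : ∀ i, 0 ≤ v i := by
    intro i
    rw [hv, ← Matrix.mulVec_mulVec]
    exact mulVec_entry_nonneg (matrix_pow_entry_nonneg hP0.1 _) (mulVec_entry_nonneg hP1.1 hsingle) i
  have hv1 : ∑ i, v i = 1 := by
    rw [hv, ← Matrix.mulVec_mulVec, hP0.sum_pow_mulVec, hP1.sum_mulVec]
    simp
  have hvpos : ∃ i ∈ Finset.univ, 0 < v i := by
    refine Finset.exists_lt_of_sum_lt (f := fun _ => (0 : ℝ)) ?_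
    simp [hv1]
  set T := (Int.ceil (Real.log (y / B) / Real.log (1 / c ^ 2))).toNat with hT
  set m := max θ T - θ with hm
  have hν : max θ T = θ + m := by omega
  rw [hν]
  -- `J` as a series over the elapsed time `k` since `θ`.
  have hJ : HasSum (fun k => ((abar ^ 2) ^ (θ + k) * y + Mbar * ((a ^ 2) ^ (θ + k) - 1)
        - max B (y * (c ^ 2) ^ (θ + k))) * (d ⬝ᵥ (PE ^ k) *ᵥ v))
      ((abar ^ 2) ^ θ * (d ⬝ᵥ (1 - abar ^ 2 • PE)⁻¹ *ᵥ v) * y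
        + Mbar * ((a ^ 2) ^ θ * (d ⬝ᵥ (1 - a ^ 2 • PE)⁻¹ *ᵥ v)
          - 1 ^ θ * (d ⬝ᵥ (1 - (1 : ℝ) • PE)⁻¹ *ᵥ v))
        - (B * (1 ^ (θ + m) * (d ⬝ᵥ (PE ^ m * (1 - (1 : ℝ) • PE)⁻¹) *ᵥ v))
          + y * ((c ^ 2) ^ θ * (d ⬝ᵥ (1 - c ^ 2 • PE)⁻¹ *ᵥ v)
            - (c ^ 2) ^ (θ + m) * (d ⬝ᵥ (PE ^ m * (1 - c ^ 2 • PE)⁻¹) *ᵥ v)))) := by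
    have hx := hasSum_dot PE hA0 hρ h1.le (by linarith) d v 0 θ
    have hc := hasSum_dot PE hA0 hρ hC0.le (by linarith) d v 0 θ
    have hA := hasSum_dot PE hA0 hρ hA0.le le_rfl d v 0 θ
    have ho := hasSum_dot PE hA0 hρ zero_le_one ha.le d v 0 θ
    have htail : ∀ b : ℝ, 0 ≤ b → b ≤ a ^ 2 →
        HasSum (fun k => if m ≤ k then b ^ (θ + k) * (d ⬝ᵥ (PE ^ k) *ᵥ v) else 0)
          (b ^ (θ + m) * (d ⬝ᵥ (PE ^ m * (1 - b • PE)⁻¹) *ᵥ v)) := fun b hb0 hb =>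
      hasSum_tail m (hasSum_dot PE hA0 hρ hb0 hb d v m (θ + m)) fun k => by rw [add_assoc]
    have htc := htail (c ^ 2) hC0.le (by linarith)
    have hto := htail 1 zero_le_one ha.le
    simp only [pow_zero, Matrix.one_mul] at hx hc hA ho
    refine (((hx.mul_right y).add ((hA.sub ho).mul_left Mbar)).sub
      ((hto.mul_left B).add ((hc.sub htc).mul_left y))).congr_fun fun k => ?_
    have hiff : m ≤ k ↔ y * (c ^ 2) ^ (θ + k) ≤ B := by
      rw [← ceil_log_le_iff hB0 hC0 h3 hy, ← hT]
      omega
    simp only [zero_add, one_pow]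
    by_cases hmk : m ≤ k
    · rw [max_eq_left (hiff.1 hmk), if_pos hmk, if_pos hmk]
      ring
    · rw [max_eq_right (not_le.1 (mt hiff.2 hmk)).le, if_neg hmk, if_neg hmk]
      ring
  set N := D - θ with hNdef
  have hDN : D = θ + N := by omega
  have hJ' := (hasSum_nat_add_iff' N).2 hJ
  -- From time `D` on, the series is dominated by that of `Q(D)` applied to `PE ^ N *ᵥ v`.
  have htaille := hasSum_le (fun k => ?_) hJ' (hQsum ((PE ^ N) *ᵥ v))
  swap
  · have := term_le_coef (N := Mbar) (A := a ^ 2) (y := y) hB0 h1 h2 h3 D k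
    rw [Matrix.mulVec_mulVec v (PE ^ k) (PE ^ N), ← pow_add,
      show θ + (k + N) = D + k by omega]
    exact mul_le_mul_of_nonneg_right this (hw0 v hv0 _)
  -- Before time `D` every coefficient of `J` is negative on its own, by `coef_zero_neg`.
  have hhead : ∀ k, k < N → ((abar ^ 2) ^ (θ + k) * y + Mbar * ((a ^ 2) ^ (θ + k) - 1)
        - max B (y * (c ^ 2) ^ (θ + k))) < 0 := fun k hk =>
    (term_le_coef hB0 h1 h2 h3 (θ + k) 0).trans_lt (hneg (θ + k) (by omega) (by omega))
  rcases Nat.eq_zero_or_pos N with hN0 | hNpos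
  · rw [hN0] at htaille
    simp only [Finset.range_zero, Finset.sum_empty, sub_zero, pow_zero, Matrix.one_mulVec]
      at htaille
    refine htaille.trans_lt ?_
    obtain ⟨i, hi, hvi⟩ := hvpos
    exact Finset.sum_neg' (fun i _ => mul_nonpos_of_nonpos_of_nonneg (hQ i).le (hv0 i))
      ⟨i, hi, mul_neg_of_neg_of_pos (hQ i) hvi⟩
  · have hdv : 0 < d ⬝ᵥ (PE ^ 0) *ᵥ v := by
      obtain ⟨i, hi, hvi⟩ := hvpos
      rw [pow_zero, Matrix.one_mulVec]
      exact Finset.sum_pos' (fun i _ => mul_nonneg (hd i).le (hv0 i))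
        ⟨i, hi, mul_pos (hd i) hvi⟩
    have hsumneg := Finset.sum_neg' (s := Finset.range N)
      (fun k hk => mul_nonpos_of_nonpos_of_nonneg (hhead k (Finset.mem_range.1 hk)).le
        (hw0 v hv0 k))
      ⟨0, Finset.mem_range.2 hNpos, mul_neg_of_neg_of_pos (hhead 0 hNpos) hdv⟩
    have := hQle _ (mulVec_entry_nonneg (matrix_pow_entry_nonneg hPE N) hv0)
    linarith
end

section
/- Let n ∈ ℕ, let P₁ be an n×n real column-stochastic matrix, let e ∈ [0,1]ⁿ, let E := diag(e) and d := 1 − e (entrywise). Let a, ā, c, M, B ∈ ℝ with a² > 1, 0 < ā² < c² < 1, M > 0, B > 0; set M̄ := M/(a²−1), and suppose a²·ρ(P₁E) < 1. Define Z_θ(b) := b^θ dᵀ (I − bP₁E)⁻¹, Q(θ) := ( Z_θ(ā²) − Z_θ(c²) )·B·c^{−2θ} + M̄·( Z_θ(a²) − Z_θ(1) ), and for 𝒳 ≥ 0, Q_𝒳(θ) := ( Z_θ(ā²) − Z_θ(c²) )·max{𝒳, B·c^{−2θ}} + M̄·( Z_θ(a²) − Z_θ(1) ). Then for every 𝒳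 ≥ 0 and every θ ∈ ℕ with θ ≥ 1, Q_𝒳(θ) ≤ Q(θ) entrywise. -/
/-!
Since `max X (B / c ^ (2θ)) ≥ B / c ^ (2θ)`, it suffices that `Z (ā²) θ ≤ Z (c²) θ` entrywise, i.e.
that `b ↦ b ^ θ • d (1 - b • PE)⁻¹` is monotone on `[0, 1)`. The matrix `PE` is entrywise nonnegative
with column sums `e j ≤ 1`, so for `b < 1` a minimum principle holds (`nonneg_of_supersolution`):
a row vector `w` with `w ≥ b • w PE` is nonnegative. It gives invertibility of `1 - b • PE`,
nonnegativity of `v b = d (1 - b • PE)⁻¹`, the solution of `v = d + b • v PE`, and, applied to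
`v b₂ - v b₁`, its monotonicity in `b`.
-/

open Matrix

/-- Minimum principle: look at an index where `w` is smallest; a negative minimum `m` would satisfy
`m ≥ b * m > m`. -/
lemma nonneg_of_supersolution {n : ℕ} {K : Matrix (Fin n) (Fin n) ℝ}
    (hK : ∀ i j, 0 ≤ K i j) (hs : ∀ j, ∑ i, K i j ≤ 1) {b : ℝ} (hb0 : 0 ≤ b) (hb1 : b < 1)
    {w : Fin n → ℝ} (hw : ∀ j, b * (w ᵥ* K) j ≤ w j) (j : Fin n) : 0 ≤ w j := by
  have : Nonempty (Fin n) := ⟨j⟩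
  obtain ⟨m, hm⟩ := Finite.exists_min w
  refine le_trans ?_ (hm j)
  by_contra! hneg
  have h1 : w m * ∑ i, K i m ≤ (w ᵥ* K) m := by
    rw [Finset.mul_sum]
    exact Finset.sum_le_sum fun i _ => mul_le_mul_of_nonneg_right (hm i) (hK i m)
  have h2 : w m ≤ w m * ∑ i, K i m := by nlinarith [hs m]
  nlinarith [hw m, mul_le_mul_of_nonneg_left (h2.trans h1) hb0]

lemma isUnit_one_sub_smul {n : ℕ} {K : Matrix (Fin n) (Fin n) ℝ}
    (hK : ∀ i j, 0 ≤ K i j) (hs : ∀ j, ∑ i, K i j ≤ 1) {b : ℝ} (hb0 : 0 ≤ b) (hb1 : b < 1) :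
    IsUnit (1 - b • K) := by
  rw [← Matrix.vecMul_injective_iff_isUnit]
  intro x y hxy
  have key : ∀ x y : Fin n → ℝ, x ᵥ* (1 - b • K) = y ᵥ* (1 - b • K) → ∀ j, 0 ≤ (x - y) j := by
    intro x y hxy
    refine nonneg_of_supersolution hK hs hb0 hb1 fun j => ?_
    have h := congrFun hxy j
    simp only [Matrix.vecMul_sub, Matrix.vecMul_one, Matrix.vecMul_smul, Pi.sub_apply,
      Pi.smul_apply, smul_eq_mul, Matrix.sub_vecMul] at h ⊢
    linarith
  funext j
  have h1 := key x y hxy j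
  have h2 := key y x hxy.symm j
  simp only [Pi.sub_apply] at h1 h2
  linarith

/-- `v = d (1 - b • K)⁻¹` solves the fixed-point equation `v = d + b • v K`. -/
lemma vecMul_inv_eq {n : ℕ} {K : Matrix (Fin n) (Fin n) ℝ}
    (hK : ∀ i j, 0 ≤ K i j) (hs : ∀ j, ∑ i, K i j ≤ 1) {b : ℝ} (hb0 : 0 ≤ b) (hb1 : b < 1)
    (d : Fin n → ℝ) (j : Fin n) :
    (d ᵥ* (1 - b • K)⁻¹) j = d j + b * ((d ᵥ* (1 - b • K)⁻¹) ᵥ* K) j := by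
  have hu := (Matrix.isUnit_iff_isUnit_det _).1 (isUnit_one_sub_smul hK hs hb0 hb1)
  have h : (d ᵥ* (1 - b • K)⁻¹) ᵥ* (1 - b • K) = d := by
    rw [Matrix.vecMul_vecMul, Matrix.nonsing_inv_mul _ hu, Matrix.vecMul_one]
  have h' := congrFun h j
  rw [Matrix.vecMul_sub, Matrix.vecMul_one, Matrix.vecMul_smul] at h'
  simp only [Pi.sub_apply, Pi.smul_apply, smul_eq_mul] at h'
  linarith

lemma vecMul_inv_nonneg {n : ℕ} {K : Matrix (Fin n) (Fin n) ℝ}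
    (hK : ∀ i j, 0 ≤ K i j) (hs : ∀ j, ∑ i, K i j ≤ 1) {b : ℝ} (hb0 : 0 ≤ b) (hb1 : b < 1)
    {d : Fin n → ℝ} (hd : ∀ j, 0 ≤ d j) (j : Fin n) : 0 ≤ (d ᵥ* (1 - b • K)⁻¹) j :=
  nonneg_of_supersolution hK hs hb0 hb1
    (fun j => by linarith [vecMul_inv_eq hK hs hb0 hb1 d j, hd j]) j

lemma vecMul_inv_mono {n : ℕ} {K : Matrix (Fin n) (Fin n) ℝ}
    (hK : ∀ i j, 0 ≤ K i j) (hs : ∀ j, ∑ i, K i j ≤ 1) {b b' : ℝ} (hb0 : 0 ≤ b) (hbb : b ≤ b')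
    (hb1 : b' < 1) {d : Fin n → ℝ} (hd : ∀ j, 0 ≤ d j) (j : Fin n) :
    (d ᵥ* (1 - b • K)⁻¹) j ≤ (d ᵥ* (1 - b' • K)⁻¹) j := by
  rw [← sub_nonneg, ← Pi.sub_apply]
  refine nonneg_of_supersolution hK hs hb0 (hbb.trans_lt hb1) (fun j => ?_) j
  have e1 := vecMul_inv_eq hK hs hb0 (hbb.trans_lt hb1) d j
  have e2 := vecMul_inv_eq hK hs (hb0.trans hbb) hb1 d j
  have h : 0 ≤ ((d ᵥ* (1 - b' • K)⁻¹) ᵥ* K) j := by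
    simp only [Matrix.vecMul, dotProduct]
    refine Finset.sum_nonneg fun i _ => ?_
    exact mul_nonneg (vecMul_inv_nonneg hK hs (hb0.trans hbb) hb1 hd i) (hK i j)
  rw [Matrix.sub_vecMul, Pi.sub_apply, Pi.sub_apply]
  -- `v' - v - b (v' - v) K = (b' - b) v' K`, which is nonnegative
  nlinarith [mul_nonneg (sub_nonneg.2 hbb) h]

/-- For every `𝒳 ≥ 0` and every `θ ≥ 1`,
`Q_𝒳(θ) = (Z_θ(ā²) - Z_θ(c²))·max{𝒳, B·c^{-2θ}} + M̄·(Z_θ(a²) - Z_θ(1))` is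
bounded above entrywise by `Q(θ)`, in which the max is replaced by `B·c^{-2θ}`. -/
theorem QX_le_Q (n : ℕ) (P1 : Matrix (Fin n) (Fin n) ℝ)
    (hP1 : ColStochastic P1)
    (e : Fin n → ℝ) (he : ∀ i, e i ∈ Set.Icc (0 : ℝ) 1)
    (a abar c M B : ℝ)
    (ha : 1 < a ^ 2) (h1 : 0 < abar ^ 2) (h2 : abar ^ 2 < c ^ 2) (h3 : c ^ 2 < 1)
    (hM : 0 < M) (hB : 0 < B)
    (hρ : a ^ 2 * specRad (P1 * Matrix.diagonal e) < 1) :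
    let PE := P1 * Matrix.diagonal e
    let d : Fin n → ℝ := fun i => 1 - e i
    let Mbar : ℝ := M / (a ^ 2 - 1)
    let Z : ℝ → ℕ → Fin n → ℝ := fun b θ => (b ^ θ) • Matrix.vecMul d (1 - b • PE)⁻¹
    ∀ X : ℝ, 0 ≤ X → ∀ θ : ℕ, 1 ≤ θ → ∀ i : Fin n,
      (max X (B / c ^ (2 * θ)) • (Z (abar ^ 2) θ - Z (c ^ 2) θ)
          + Mbar • (Z (a ^ 2) θ - Z 1 θ)) i
        ≤ ((B / c ^ (2 * θ)) • (Z (abar ^ 2) θ - Z (c ^ 2) θ)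
          + Mbar • (Z (a ^ 2) θ - Z 1 θ)) i := by
  intro PE d Mbar Z X _ θ _ i
  have hK : ∀ i j, 0 ≤ PE i j := fun i j => by
    simp only [PE, Matrix.mul_diagonal]
    exact mul_nonneg (hP1.1 i j) (he j).1
  have hs : ∀ j, ∑ i, PE i j ≤ 1 := fun j => by
    simp only [PE, Matrix.mul_diagonal]
    rw [← Finset.sum_mul, hP1.2 j, one_mul]
    exact (he j).2
  have hd : ∀ j, 0 ≤ d j := fun j => sub_nonneg.2 (he j).2
  have hZ : Z (abar ^ 2) θ i ≤ Z (c ^ 2) θ i := by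
    simp only [Z, Pi.smul_apply, smul_eq_mul]
    exact mul_le_mul (pow_le_pow_left₀ h1.le h2.le θ)
      (vecMul_inv_mono hK hs h1.le h2.le h3 hd i)
      (vecMul_inv_nonneg hK hs h1.le (h2.trans h3) hd i) (pow_nonneg (h1.trans h2).le θ)
  simp only [Pi.add_apply, Pi.smul_apply, Pi.sub_apply, smul_eq_mul]
  exact add_le_add_left
    (mul_le_mul_of_nonpos_right (le_max_right _ _) (sub_nonpos.2 hZ)) _
end
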